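/- The Kullback–Leibler divergence D(f_Normal(·|log y, y⁻¹) ‖ f_logGamma(·|y,1)) between the Gaussian density with mean log y and variance 1/y and the log-Gamma density with parameters y and 1 tends to 0 as y → ∞. -/

import Mathlib

open Real MeasureTheory Filter

/-- Gaussian density with mean `m` and variance `v`. -/
noncomputable def fNormal (m v ξ : ℝ) : ℝ :=
  (Real.sqrt (2 * Real.pi * v))⁻¹ * Real.exp (-(ξ - m) ^ 2 / (2 * v))

/-- log-Gamma density with parameters `r` and `s`. -/
noncomputable def fLogGamma (r s ξ : ℝ) : ℝ :=
  (Real.Gamma r * s ^ r)⁻¹ * Real.exp (r * ξ - Real.exp ξ / s)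

/-- Kullback–Leibler divergence between densities `f` and `g` on `ℝ`. -/
noncomputable def KL (f g : ℝ → ℝ) : ℝ :=
  ∫ ξ : ℝ, f ξ * Real.log (f ξ / g ξ)

/-!
The logarithm of the density ratio is a linear combination of `1`, `ξ`, `(ξ - m) ^ 2` and
`exp ξ`, so the Gaussian moments give the divergence in closed form. For the given parameters it is
the sum of the error in Stirling's formula for `log (Gamma y)` and of
`y * (exp (1 / (2 * y)) - 1) - 1 / 2`.

Stirling's formula at real arguments follows from the one for factorials: between `a` and
`y ∈ [a, a + 1]`, the secants of both `log ∘ Gamma` (by convexity and the functional equation) and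
of its Stirling approximation (by the mean value theorem) have slopes between `log (a - 1)` and
`log (a + 1)`, and these two bounds differ by `o(1)`.
-/

section Stirling

/-- Stirling's approximation to `log (Gamma x)`, including the constant term, so that the
difference tends to zero as `x → ∞`. -/
noncomputable def stirlingLogGamma (x : ℝ) : ℝ :=
  (x - 1 / 2) * log x - x + log (2 * π) / 2

lemma log_Gamma_add_one {x : ℝ} (hx : 0 < x) :
    log (Gamma (x + 1)) = log (Gamma x) + log x := by
  rw [Gamma_add_one hx.ne', log_mul hx.ne' (Gamma_pos_of_pos hx).ne', add_comm]

lemma log_sub_one_mul_le_log_Gamma_sub {a y : ℝ} (ha : 1 < a) (hy : a ≤ y) :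
    log (a - 1) * (y - a) ≤ log (Gamma y) - log (Gamma a) := by
  rcases hy.eq_or_lt with rfl | hay
  · simp
  have hslope := convexOn_log_Gamma.slope_mono_adjacent (Set.mem_Ioi.2 (sub_pos.2 ha))
    (Set.mem_Ioi.2 (by linarith : 0 < y)) (sub_one_lt a) hay
  have hstep := log_Gamma_add_one (sub_pos.2 ha)
  rw [sub_add_cancel] at hstep
  rwa [Function.comp_apply, Function.comp_apply, Function.comp_apply, hstep, sub_sub_cancel,
    div_one, add_sub_cancel_left, ← hstep, le_div_iff₀ (sub_pos.2 hay)] at hslope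

lemma log_Gamma_sub_le_log_mul {a y : ℝ} (ha : 0 < a) (hy : y ∈ Set.Icc a (a + 1)) :
    log (Gamma y) - log (Gamma a) ≤ log a * (y - a) := by
  rcases hy.1.eq_or_lt with rfl | hay
  · simp
  have hslope := convexOn_log_Gamma.secant_mono (Set.mem_Ioi.2 ha)
    (Set.mem_Ioi.2 (ha.trans hay)) (Set.mem_Ioi.2 (by linarith : 0 < a + 1))
    hay.ne' (lt_add_one a).ne' hy.2
  rwa [Function.comp_apply, Function.comp_apply, Function.comp_apply, log_Gamma_add_one ha,
    add_sub_cancel_left, add_sub_cancel_left, div_one, div_le_iff₀ (sub_pos.2 hay)] at hslope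

lemma hasDerivAt_stirlingLogGamma {x : ℝ} (hx : x ≠ 0) :
    HasDerivAt stirlingLogGamma (log x - 1 / (2 * x)) x := by
  have h := ((((hasDerivAt_id x).sub_const (1 / 2)).mul (hasDerivAt_log hx)).sub
    (hasDerivAt_id x)).add_const (log (2 * π) / 2)
  refine h.congr_deriv ?_
  simp only [id]
  field_simp
  ring

lemma log_sub_one_le_log_sub_inv {x : ℝ} (hx : 1 < x) : log (x - 1) ≤ log x - x⁻¹ := by
  have hx₀ : 0 < x := one_pos.trans hx
  have h := log_le_sub_one_of_pos (div_pos (sub_pos.2 hx) hx₀)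
  rw [log_div (sub_pos.2 hx).ne' hx₀.ne', sub_div, div_self hx₀.ne', one_div] at h
  linarith

lemma stirlingLogGamma_sub_mem_Icc {a y : ℝ} (ha : 1 < a) (hy : y ∈ Set.Icc a (a + 1)) :
    stirlingLogGamma y - stirlingLogGamma a ∈
      Set.Icc (log (a - 1) * (y - a)) (log (a + 1) * (y - a)) := by
  rcases hy.1.eq_or_lt with rfl | hay
  · simp
  have hderiv {x : ℝ} (hx : a ≤ x) :
      HasDerivAt stirlingLogGamma (log x - 1 / (2 * x)) x :=
    hasDerivAt_stirlingLogGamma (by linarith)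
  obtain ⟨c, ⟨hac, hcy⟩, hc⟩ := exists_hasDerivAt_eq_slope stirlingLogGamma _ hay
    (fun x hx => (hderiv hx.1).continuousAt.continuousWithinAt)
    (fun x hx => hderiv hx.1.le)
  have hc₀ : 0 < c := by linarith
  have hlower : log (a - 1) ≤ log c - 1 / (2 * c) := calc
    log (a - 1) ≤ log (c - 1) := log_le_log (by linarith) (by linarith)
    _ ≤ log c - c⁻¹ := log_sub_one_le_log_sub_inv (ha.trans hac)
    _ ≤ log c - 1 / (2 * c) := by
      rw [one_div]
      gcongr
      linarith
  have hupper : log c - 1 / (2 * c) ≤ log (a + 1) := calc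
    log c - 1 / (2 * c) ≤ log c := sub_le_self _ (by positivity)
    _ ≤ log (a + 1) := log_le_log hc₀ (hcy.le.trans hy.2)
  rw [eq_div_iff (sub_pos.2 hay).ne'] at hc
  rw [← hc]
  have hya : 0 ≤ y - a := (sub_pos.2 hay).le
  exact ⟨mul_le_mul_of_nonneg_right hlower hya, mul_le_mul_of_nonneg_right hupper hya⟩

lemma abs_log_Gamma_sub_stirlingLogGamma_sub_le {a y : ℝ} (ha : 1 < a)
    (hy : y ∈ Set.Icc a (a + 1)) :
    |(log (Gamma y) - stirlingLogGamma y) - (log (Gamma a) - stirlingLogGamma a)| ≤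
      log (a + 1) - log (a - 1) := by
  obtain ⟨hS₁, hS₂⟩ := stirlingLogGamma_sub_mem_Icc ha hy
  have hG₁ := log_sub_one_mul_le_log_Gamma_sub ha hy.1
  have hya₀ : 0 ≤ y - a := sub_nonneg.2 hy.1
  have hya₁ : y - a ≤ 1 := by linarith [hy.2]
  have hG₂ : log (Gamma y) - log (Gamma a) ≤ log (a + 1) * (y - a) :=
    (log_Gamma_sub_le_log_mul (by linarith) hy).trans
      (mul_le_mul_of_nonneg_right (log_le_log (by linarith) (by linarith)) hya₀)
  have hgap : 0 ≤ log (a + 1) - log (a - 1) :=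
    sub_nonneg.2 (log_le_log (by linarith) (by linarith))
  calc |(log (Gamma y) - stirlingLogGamma y) - (log (Gamma a) - stirlingLogGamma a)|
      ≤ (log (a + 1) - log (a - 1)) * (y - a) := by rw [abs_le]; constructor <;> linarith
    _ ≤ log (a + 1) - log (a - 1) := mul_le_of_le_one_right hgap hya₁

lemma tendsto_log_add_one_sub_log_sub_one :
    Tendsto (fun x : ℝ => log (x + 1) - log (x - 1)) atTop (nhds 0) := by
  simpa [sub_eq_add_neg] using
    (tendsto_log_comp_add_sub_log 1).sub (tendsto_log_comp_add_sub_log (-1))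

lemma tendsto_log_Gamma_natCast_sub_stirlingLogGamma :
    Tendsto (fun n : ℕ => log (Gamma n) - stirlingLogGamma n) atTop (nhds 0) := by
  have h := (Stirling.tendsto_stirlingSeq_sqrt_pi.log (by positivity)).sub_const (log √π)
  rw [sub_self] at h
  refine h.congr' ?_
  filter_upwards [eventually_gt_atTop 0] with n hn
  have hn₀ : (0 : ℝ) < n := Nat.cast_pos.2 hn
  have hfactorial := log_Gamma_add_one hn₀
  rw [Gamma_nat_eq_factorial] at hfactorial
  rw [Stirling.log_stirlingSeq_formula, hfactorial, log_mul two_ne_zero hn₀.ne',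
    log_div hn₀.ne' (exp_ne_zero 1), log_exp, log_sqrt pi_pos.le, stirlingLogGamma,
    log_mul two_ne_zero pi_ne_zero]
  ring

theorem tendsto_log_Gamma_sub_stirlingLogGamma :
    Tendsto (fun x : ℝ => log (Gamma x) - stirlingLogGamma x) atTop (nhds 0) := by
  have hfloor : Tendsto (fun x : ℝ => ⌊x⌋₊) atTop atTop := tendsto_nat_floor_atTop
  have hdiff : Tendsto (fun x : ℝ => (log (Gamma x) - stirlingLogGamma x) -
      (log (Gamma ⌊x⌋₊) - stirlingLogGamma ⌊x⌋₊)) atTop (nhds 0) := by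
    refine squeeze_zero_norm' ?_
      (tendsto_log_add_one_sub_log_sub_one.comp (tendsto_natCast_atTop_atTop.comp hfloor))
    filter_upwards [hfloor.eventually_gt_atTop 1, eventually_ge_atTop 0] with x hx hx₀
    exact abs_log_Gamma_sub_stirlingLogGamma_sub_le (Nat.one_lt_cast.2 hx)
      ⟨Nat.floor_le hx₀, (Nat.lt_floor_add_one x).le⟩
  simpa using hdiff.add (tendsto_log_Gamma_natCast_sub_stirlingLogGamma.comp hfloor)

end Stirling

lemma tendsto_mul_exp_div_sub_one (c : ℝ) :
    Tendsto (fun x : ℝ => x * (exp (c / x) - 1)) atTop (nhds c) := by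
  have hderiv : HasDerivAt (fun t : ℝ => exp (c * t)) c 0 := by
    simpa using ((hasDerivAt_id (0 : ℝ)).const_mul c).exp
  simpa [Function.comp_def, div_eq_mul_inv] using
    hderiv.tendsto_slope_zero_right.comp tendsto_inv_atTop_nhdsGT_zero

section GaussianMoments

open ProbabilityTheory
open scoped NNReal

variable (m : ℝ) (v : ℝ≥0)

lemma integrable_id_gaussianReal : Integrable (fun ξ : ℝ => ξ) (gaussianReal m v) :=
  (memLp_id_gaussianReal 1).integrable le_rfl

lemma integrable_exp_gaussianReal : Integrable exp (gaussianReal m v) := by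
  simpa using integrable_exp_mul_gaussianReal (μ := m) (v := v) 1

lemma integrable_sub_sq_gaussianReal :
    Integrable (fun ξ : ℝ => (ξ - m) ^ 2) (gaussianReal m v) :=
  ((memLp_id_gaussianReal 2).sub (memLp_const m)).integrable_sq

lemma integral_sub_sq_gaussianReal : ∫ ξ, (ξ - m) ^ 2 ∂gaussianReal m v = v := by
  simpa [variance_eq_integral measurable_id'.aemeasurable] using
    variance_fun_id_gaussianReal (μ := m) (v := v)

lemma integral_exp_gaussianReal : ∫ ξ, exp ξ ∂gaussianReal m v = exp (m + v / 2) := by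
  simpa [mgf] using congrFun (mgf_fun_id_gaussianReal (μ := m) (v := v)) 1

lemma integral_const_add_sq_add_id_add_exp_gaussianReal (a b c d : ℝ) :
    ∫ ξ, (a + b * (ξ - m) ^ 2 + c * ξ + d * exp ξ) ∂gaussianReal m v =
      a + b * v + c * m + d * exp (m + v / 2) := by
  have hsq := (integrable_sub_sq_gaussianReal m v).const_mul b
  have hid := (integrable_id_gaussianReal m v).const_mul c
  have hexp := (integrable_exp_gaussianReal m v).const_mul d
  have hconst : Integrable (fun _ : ℝ => a) (gaussianReal m v) := integrable_const a
  rw [integral_add (by fun_prop) hexp, integral_add (by fun_prop) hid, integral_add hconst hsq,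
    integral_const_mul, integral_const_mul, integral_const_mul, integral_sub_sq_gaussianReal,
    integral_id_gaussianReal, integral_exp_gaussianReal, integral_const, probReal_univ, one_smul]

lemma fNormal_eq_gaussianPDFReal : fNormal m v = gaussianPDFReal m v := rfl

end GaussianMoments

section KullbackLeibler

open ProbabilityTheory

variable {v r s : ℝ}

lemma log_fNormal_div_fLogGamma (m : ℝ) (hv : 0 < v) (hr : 0 < r) (hs : 0 < s) (ξ : ℝ) :
    log (fNormal m v ξ / fLogGamma r s ξ) =
      (log (Gamma r) + r * log s - log (2 * π * v) / 2) + (-(2 * v)⁻¹) * (ξ - m) ^ 2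
        + (-r) * ξ + s⁻¹ * exp ξ := by
  have hG : 0 < Gamma r := Gamma_pos_of_pos hr
  have hlogNormal : log (fNormal m v ξ) = -(log (2 * π * v) / 2) - (ξ - m) ^ 2 / (2 * v) := by
    rw [fNormal, log_mul (by positivity) (exp_ne_zero _), log_exp, log_inv,
      log_sqrt (by positivity)]
    ring
  have hlogLogGamma :
      log (fLogGamma r s ξ) = -(log (Gamma r) + r * log s) + (r * ξ - exp ξ / s) := by
    rw [fLogGamma, log_mul (by positivity) (exp_ne_zero _), log_exp, log_inv,
      log_mul hG.ne' (by positivity), log_rpow hs]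
  have hNormal : fNormal m v ξ ≠ 0 := by unfold fNormal; positivity
  have hLogGamma : fLogGamma r s ξ ≠ 0 := by unfold fLogGamma; positivity
  rw [log_div hNormal hLogGamma, hlogNormal, hlogLogGamma]
  ring

theorem KL_fNormal_fLogGamma (m : ℝ) (hv : 0 < v) (hr : 0 < r) (hs : 0 < s) :
    KL (fNormal m v) (fLogGamma r s) =
      log (Gamma r) + r * log s - log (2 * π * v) / 2 - 1 / 2 - r * m + exp (m + v / 2) / s := by
  lift v to NNReal using hv.le
  have hv₀ : v ≠ 0 := (NNReal.coe_pos.1 hv).ne'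
  calc KL (fNormal m v) (fLogGamma r s)
      = ∫ ξ, log (fNormal m v ξ / fLogGamma r s ξ) ∂gaussianReal m v := by
        rw [integral_gaussianReal_eq_integral_smul hv₀, ← fNormal_eq_gaussianPDFReal]
        rfl
    _ = (log (Gamma r) + r * log s - log (2 * π * v) / 2) + (-(2 * (v : ℝ))⁻¹) * v + (-r) * m
          + s⁻¹ * exp (m + v / 2) := by
        simp_rw [log_fNormal_div_fLogGamma m hv hr hs]
        exact integral_const_add_sq_add_id_add_exp_gaussianReal m v _ _ _ _
    _ = log (Gamma r) + r * log s - log (2 * π * v) / 2 - 1 / 2 - r * m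
          + exp (m + v / 2) / s := by
        field_simp
        ring

lemma KL_fNormal_log_inv_fLogGamma_one {y : ℝ} (hy : 0 < y) :
    KL (fNormal (log y) y⁻¹) (fLogGamma y 1) =
      (log (Gamma y) - stirlingLogGamma y) + (y * (exp (1 / 2 / y) - 1) - 1 / 2) := by
  have hexponent : y⁻¹ / 2 = 1 / 2 / y := by ring
  rw [KL_fNormal_fLogGamma (log y) (inv_pos.2 hy) hy one_pos, stirlingLogGamma, exp_add,
    exp_log hy, log_one, log_mul (by positivity) (inv_ne_zero hy.ne'), log_inv, hexponent]
  ring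

end KullbackLeibler

theorem kl_normal_logGamma_tendsto_zero :
    Tendsto (fun y : ℝ => KL (fNormal (Real.log y) y⁻¹) (fLogGamma y 1))
      atTop (nhds 0) := by
  have hexp : Tendsto (fun y : ℝ => y * (exp (1 / 2 / y) - 1) - 1 / 2) atTop (nhds 0) := by
    simpa using (tendsto_mul_exp_div_sub_one (1 / 2)).sub_const (1 / 2)
  have hsum := tendsto_log_Gamma_sub_stirlingLogGamma.add hexp
  rw [add_zero] at hsum
  refine hsum.congr' ?_
  filter_upwards [eventually_gt_atTop 0] with y hy
  exact (KL_fNormal_log_inv_fLogGamma_one hy).symm
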